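/- arXiv:2011.04444 — 2 statements merged into one kernel-verified Lean document; each statement's English description precedes it below -/
import Mathlib

section
/- Every 5-uniform intersecting hypergraph with exactly 12 edges in which at least 21 vertices lie on some edge has covering number at most 4. -/
/-!
Suppose no four vertices cover `E`. Write `d v` for the degree of `v`, and let `U` be the set of
vertices on some edge.

* Edges pair up: any `2k` edges are covered by `k` vertices, so a set of at most three vertices
  missing at most two edges extends to a cover of size four. A vertex of degree at least `6`
  would leave at most `6` edges, which three vertices cover; hence `d v ≤ 5`.
* An edge is itself a cover. Removing from it a vertex of degree `1` leaves a cover of size four;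
  removing two vertices of degree at most `2` uncovers at most two further edges. So all degrees
  are at least `2` and each edge has at most one vertex of degree `2`.
* Each edge meets the other `11`, so `∑ v ∈ e, (d v - 1) ≥ 11`, that is `∑ v ∈ e, (d v - 3) ≥ 1`.

Summing over the edges gives `∑ v ∈ U, d v * (d v - 3) ≥ 12`, while `∑ v ∈ U, d v = 60` and
`|U| ≥ 21` give `∑ v ∈ U, (3 - d v) ≥ 3`. Hence `∑ v ∈ U, (d v - 3) * (d v - 5) ≥ 12 + 5 * 3 = 27`.
For degrees between `2` and `5` the summand is positive only at degree `2`, where it is `3`, and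
there are at most `6` vertices of degree `2`, so the sum is at most `18`.
-/

/-- A set of vertices `C` covers the hypergraph with edge set `E` if every edge
contains a vertex of `C`. -/
def IsCover {V : Type*} (E : Finset (Finset V)) (C : Finset V) : Prop :=
  ∀ e ∈ E, ∃ v ∈ e, v ∈ C

/-- The covering number: the minimum size of a cover. -/
noncomputable def coverNumber {V : Type*} (E : Finset (Finset V)) : ℕ :=
  sInf {n : ℕ | ∃ C : Finset V, C.card = n ∧ IsCover E C}

/-- The degree of a vertex: the number of edges containing it. -/
def degree {V : Type*} [DecidableEq V] (E : Finset (Finset V)) (v : V) : ℕ :=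
  (E.filter (fun e => v ∈ e)).card

/-- Pairing up the edges, `2k` members of an intersecting family are covered by `k` vertices. -/
theorem exists_cover_of_card_le {V : Type*} [DecidableEq V] (k : ℕ) :
    ∀ F : Finset (Finset V), (∀ e ∈ F, e.Nonempty) →
      (∀ e ∈ F, ∀ f ∈ F, e ≠ f → (e ∩ f).Nonempty) → F.card ≤ 2 * k →
      ∃ C : Finset V, C.card ≤ k ∧ IsCover F C := by
  induction k with
  | zero =>
    intro F _ _ hF
    have : F = ∅ := by simpa using hF
    subst this
    exact ⟨∅, by simp, by simp [IsCover]⟩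
  | succ k ih =>
    intro F hne hint hF
    -- It suffices to find a vertex lying on all but `2k` of the edges.
    have key : ∀ v : V, ∀ G ⊆ F, (∀ e ∈ F, e ∉ G → v ∈ e) → G.card ≤ 2 * k →
        ∃ C : Finset V, C.card ≤ k + 1 ∧ IsCover F C := by
      intro v G hG hv hc
      obtain ⟨C, hC, hcov⟩ := ih G (fun e he => hne e (hG he))
        (fun e he f hf => hint e (hG he) f (hG hf)) hc
      refine ⟨insert v C, (Finset.card_insert_le _ _).trans (by omega), fun e he => ?_⟩
      by_cases heG : e ∈ G
      · obtain ⟨w, hw, hwC⟩ := hcov e heG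
        exact ⟨w, hw, Finset.mem_insert_of_mem hwC⟩
      · exact ⟨v, hv e he heG, Finset.mem_insert_self _ _⟩
    rcases Nat.lt_or_ge 1 F.card with h1 | h1
    · obtain ⟨e, he, f, hf, hef⟩ := Finset.one_lt_card.1 h1
      obtain ⟨v, hv⟩ := hint e he f hf hef
      rw [Finset.mem_inter] at hv
      refine key v ((F.erase e).erase f)
        ((Finset.erase_subset _ _).trans (Finset.erase_subset _ _)) ?_ ?_
      · intro g hg hgn
        by_cases h : g = f
        · exact h ▸ hv.2
        · by_cases h' : g = e
          · exact h' ▸ hv.1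
          · exact absurd (Finset.mem_erase.2 ⟨h, Finset.mem_erase.2 ⟨h', hg⟩⟩) hgn
      · rw [Finset.card_erase_of_mem (Finset.mem_erase.2 ⟨hef.symm, hf⟩),
          Finset.card_erase_of_mem he]
        omega
    · rcases F.eq_empty_or_nonempty with rfl | ⟨e, he⟩
      · exact ⟨∅, by simp, by simp [IsCover]⟩
      · obtain ⟨v, hv⟩ := hne e he
        refine key v ∅ (by simp) (fun g hg _ => ?_) (by simp)
        exact Finset.card_le_one.1 h1 e he g hg ▸ hv

/-- A set `A` missing at most `2k` edges of an intersecting family extends to a cover by adding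
`k` vertices. -/
theorem exists_cover_extend {V : Type*} [DecidableEq V] {E : Finset (Finset V)}
    (hne : ∀ e ∈ E, e.Nonempty)
    (hint : ∀ e ∈ E, ∀ f ∈ E, e ≠ f → (e ∩ f).Nonempty) (k : ℕ) (A : Finset V)
    (hA : (E.filter (fun f => Disjoint f A)).card ≤ 2 * k) :
    ∃ C : Finset V, C.card ≤ A.card + k ∧ IsCover E C := by
  obtain ⟨C, hC, hcov⟩ := exists_cover_of_card_le k (E.filter (fun f => Disjoint f A))
    (fun e he => hne e (Finset.mem_filter.1 he).1)
    (fun e he f hf => hint e (Finset.mem_filter.1 he).1 f (Finset.mem_filter.1 hf).1) hA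
  refine ⟨A ∪ C, (Finset.card_union_le _ _).trans (by omega), fun e he => ?_⟩
  by_cases hd : Disjoint e A
  · obtain ⟨w, hw, hwC⟩ := hcov e (Finset.mem_filter.2 ⟨he, hd⟩)
    exact ⟨w, hw, Finset.mem_union_right _ hwC⟩
  · obtain ⟨w, hw, hwA⟩ := Finset.not_disjoint_iff.1 hd
    exact ⟨w, hw, Finset.mem_union_left _ hwA⟩

/-- Double counting of incidences, weighted by a function of the vertex. -/
theorem sum_edges_eq {V : Type*} [DecidableEq V] (E : Finset (Finset V)) (g : V → ℤ) :
    ∑ e ∈ E, ∑ v ∈ e, g v = ∑ v ∈ E.biUnion id, (degree E v : ℤ) * g v := by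
  rw [Finset.sum_comm' (t' := E.biUnion id) (s' := fun v => E.filter (fun e => v ∈ e))]
  · simp [degree]
  · intro e v
    simp only [Finset.mem_filter, Finset.mem_biUnion, id]
    exact ⟨fun h => ⟨h, e, h⟩, fun h => h.1⟩

/-- Every edge other than `e` that misses `e \ S` contains a vertex of `S`, so there are at most
`∑ v ∈ S, (d v - 1)` of them. -/
theorem card_le_sum_degree {V : Type*} [DecidableEq V] {E : Finset (Finset V)}
    (hint : ∀ e ∈ E, ∀ f ∈ E, e ≠ f → (e ∩ f).Nonempty) {e : Finset V} (he : e ∈ E)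
    (S : Finset V) (hS : S ⊆ e) :
    ((E.erase e).filter (fun f => Disjoint f (e \ S))).card ≤ ∑ v ∈ S, (degree E v - 1) := by
  have hsub : (E.erase e).filter (fun f => Disjoint f (e \ S)) ⊆
      S.biUnion (fun v => (E.filter (fun f => v ∈ f)).erase e) := by
    intro f hf
    obtain ⟨hfe, hd⟩ := Finset.mem_filter.1 hf
    obtain ⟨hne, hfE⟩ := Finset.mem_erase.1 hfe
    obtain ⟨v, hv⟩ := hint f hfE e he hne
    obtain ⟨hvf, hve⟩ := Finset.mem_inter.1 hv
    have hvS : v ∈ S := by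
      by_contra h
      exact Finset.disjoint_left.1 hd hvf (Finset.mem_sdiff.2 ⟨hve, h⟩)
    exact Finset.mem_biUnion.2 ⟨v, hvS, Finset.mem_erase.2 ⟨hne, Finset.mem_filter.2 ⟨hfE, hvf⟩⟩⟩
  refine (Finset.card_le_card hsub).trans (Finset.card_biUnion_le.trans ?_)
  refine Finset.sum_le_sum fun v hv => ?_
  rw [Finset.card_erase_of_mem (Finset.mem_filter.2 ⟨he, hS hv⟩)]
  rfl

/-- Every 5-uniform intersecting hypergraph with exactly 12 edges in which at least 21
vertices lie on some edge has covering number at most 4. -/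
theorem stmt14 {V : Type*} [DecidableEq V] (E : Finset (Finset V))
    (hunif : ∀ e ∈ E, e.card = 5)
    (hint : ∀ e ∈ E, ∀ f ∈ E, e ≠ f → (e ∩ f).Nonempty)
    (hcard : E.card = 12)
    (hverts : 21 ≤ (E.biUnion id).card) :
    coverNumber E ≤ 4 := by
  by_contra! hlt
  have hno : ∀ C : Finset V, IsCover E C → 5 ≤ C.card := by
    intro C hC
    have : coverNumber E ≤ C.card := Nat.sInf_le ⟨C, rfl, hC⟩
    omega
  have hne : ∀ e ∈ E, e.Nonempty := fun e he => Finset.card_pos.1 (by rw [hunif e he]; omega)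
  have hno' : ∀ (k : ℕ) (A : Finset V), A.card + k ≤ 4 →
      2 * k < (E.filter (fun f => Disjoint f A)).card := by
    intro k A hAk
    by_contra! h
    obtain ⟨C, hC, hcov⟩ := exists_cover_extend hne hint k A h
    have := hno C hcov
    omega
  have hmax : ∀ v, degree E v ≤ 5 := by
    intro v
    have h := hno' 3 {v} (by simp)
    have h2 := Finset.card_filter_add_card_filter_not (s := E) (fun f => v ∈ f)
    simp only [Finset.disjoint_singleton_right] at h
    unfold degree
    omega
  -- Removing a proper subset `S` from an edge `e` uncovers edges other than `e` only.
  have hsub : ∀ e ∈ E, ∀ S ⊆ e, S.card < 5 → ∀ k, k + 1 ≤ S.card →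
      2 * k < ∑ v ∈ S, (degree E v - 1) := by
    intro e he S hS hS5 k hk
    have hc := Finset.card_sdiff_add_card_eq_card hS
    have hce := hunif e he
    have h := hno' k (e \ S) (by omega)
    refine h.trans_le (le_trans (Finset.card_le_card ?_) (card_le_sum_degree hint he S hS))
    intro f hf
    obtain ⟨hfE, hd⟩ := Finset.mem_filter.1 hf
    refine Finset.mem_filter.2 ⟨Finset.mem_erase.2 ⟨?_, hfE⟩, hd⟩
    rintro rfl
    have : (f \ S).card = 0 := by
      rw [Finset.card_eq_zero, ← Finset.disjoint_self_iff_empty]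
      exact hd.mono_left Finset.sdiff_subset
    omega
  have hmin : ∀ e ∈ E, ∀ v ∈ e, 2 ≤ degree E v := by
    intro e he v hv
    have h := hsub e he {v} (by simpa using hv) (by simp) 0 (by simp)
    simp only [Finset.sum_singleton] at h
    omega
  have htwo : ∀ e ∈ E, ∑ v ∈ e, (if degree E v = 2 then (1 : ℤ) else 0) ≤ 1 := by
    intro e he
    rw [Finset.sum_boole]
    norm_cast
    rw [Finset.card_le_one]
    intro u hu v hv
    obtain ⟨hue, hu2⟩ := Finset.mem_filter.1 hu
    obtain ⟨hve, hv2⟩ := Finset.mem_filter.1 hv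
    by_contra huv
    have h := hsub e he {u, v} (by simp [Finset.insert_subset_iff, hue, hve])
      (by rw [Finset.card_pair huv]; omega) 1 (by rw [Finset.card_pair huv])
    rw [Finset.sum_pair huv] at h
    omega
  have hedge : ∀ e ∈ E, (1 : ℤ) ≤ ∑ v ∈ e, ((degree E v : ℤ) - 3) := by
    intro e he
    have h := card_le_sum_degree hint he e subset_rfl
    simp only [sdiff_self, Finset.bot_eq_empty, Finset.disjoint_empty_right,
      Finset.filter_true, Finset.card_erase_of_mem he, hcard] at h
    have h2 : ((∑ v ∈ e, (degree E v - 1) : ℕ) : ℤ) = ∑ v ∈ e, (((degree E v : ℤ) - 3) + 2) := by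
      rw [Nat.cast_sum]
      refine Finset.sum_congr rfl fun v hv => ?_
      have := hmin e he v hv
      omega
    rw [Finset.sum_add_distrib, Finset.sum_const, hunif e he, nsmul_eq_mul] at h2
    omega
  set U := E.biUnion id with hU
  have s1 : (12 : ℤ) ≤ ∑ v ∈ U, (degree E v : ℤ) * ((degree E v : ℤ) - 3) := by
    rw [hU, ← sum_edges_eq]
    calc (12 : ℤ) = ∑ e ∈ E, 1 := by simp [hcard]
      _ ≤ _ := Finset.sum_le_sum hedge
  have s2 : ∑ v ∈ U, (degree E v : ℤ) * (if degree E v = 2 then (1 : ℤ) else 0) ≤ 12 := by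
    rw [hU, ← sum_edges_eq]
    calc _ ≤ ∑ e ∈ E, (1 : ℤ) := Finset.sum_le_sum htwo
      _ = 12 := by simp [hcard]
  have s3 : ∑ v ∈ U, (degree E v : ℤ) * 1 = 60 := by
    rw [hU, ← sum_edges_eq, Finset.sum_congr rfl (g := fun _ => (5 : ℤ))]
    · simp [hcard]
    · intro e he
      simp [hunif e he]
  have s4 : (21 : ℤ) ≤ ∑ v ∈ U, (1 : ℤ) := by
    simpa using (by exact_mod_cast hverts : (21 : ℤ) ≤ (U.card : ℤ))
  -- The pointwise inequality `2 (d - 3) (d - 5) ≤ 3 d [d = 2]` on `2 ≤ d ≤ 5`, expanded along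
  -- the sums above.
  have s5 : ∑ v ∈ U, (2 * ((degree E v : ℤ) * ((degree E v : ℤ) - 3))
        - 10 * ((degree E v : ℤ) * 1) + 30 * 1) ≤
      ∑ v ∈ U, 3 * ((degree E v : ℤ) * (if degree E v = 2 then (1 : ℤ) else 0)) := by
    refine Finset.sum_le_sum fun v hv => ?_
    obtain ⟨e, he, hve⟩ := Finset.mem_biUnion.1 hv
    have h2 := hmin e he v hve
    have h5 := hmax v
    generalize degree E v = d at h2 h5
    interval_cases d <;> norm_num
  rw [Finset.sum_add_distrib, Finset.sum_sub_distrib, ← Finset.mul_sum, ← Finset.mul_sum,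
    ← Finset.mul_sum, ← Finset.mul_sum] at s5
  linarith
end

section
/- Every 4-uniform intersecting hypergraph with exactly 9 edges in which at least 14 vertices lie on some edge has covering number at most 3. -/
/-- Double counting of the incidences between the vertices of `g` and the edges of `F`. -/
lemma sum_degree_eq {V : Type*} [DecidableEq V] (F : Finset (Finset V)) (g : Finset V) :
    ∑ w ∈ g, degree F w = ∑ f ∈ F, (g ∩ f).card := by
  simp only [degree, Finset.card_filter]
  rw [Finset.sum_comm]
  refine Finset.sum_congr rfl fun f _ => ?_
  rw [← Finset.card_filter, Finset.filter_mem_eq_inter]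

/-- If all degrees of an intersecting 4-uniform family of `4 * d - 3` edges are at most `d`, then
all of them equal `d`, because the four vertices of an edge have to account for its meeting the
`4 * (d - 1)` other edges. Hence the family spans `4 * #F / d` vertices. -/
lemma mul_card_biUnion {V : Type*} [DecidableEq V] (F : Finset (Finset V)) (d : ℕ)
    (hunif : ∀ e ∈ F, e.card = 4)
    (hint : ∀ e ∈ F, ∀ f ∈ F, e ≠ f → (e ∩ f).Nonempty)
    (hcard : F.card + 3 = 4 * d) (hdeg : ∀ w, degree F w ≤ d) :
    d * (F.biUnion id).card = 4 * F.card := by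
  have hreg : ∀ w ∈ F.biUnion id, degree F w = d := by
    intro w hw
    obtain ⟨e, he, hwe⟩ := Finset.mem_biUnion.1 hw
    have hwe : w ∈ e := hwe
    have h1 := sum_degree_eq F e
    rw [← Finset.add_sum_erase _ _ he, Finset.inter_self, hunif e he,
      ← Finset.add_sum_erase _ _ hwe] at h1
    have h2 : (F.erase e).card • 1 ≤ ∑ f ∈ F.erase e, (e ∩ f).card := by
      refine Finset.card_nsmul_le_sum _ _ _ fun f hf => ?_
      have hf := Finset.mem_erase.1 hf
      exact Finset.card_pos.2 (hint e he f hf.2 hf.1.symm)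
    have h3 : ∑ x ∈ e.erase w, degree F x ≤ (e.erase w).card • d :=
      Finset.sum_le_card_nsmul _ _ _ fun x _ => hdeg x
    rw [Finset.card_erase_of_mem he] at h2
    rw [Finset.card_erase_of_mem hwe, hunif e he] at h3
    have h4 := hdeg w
    simp only [smul_eq_mul] at h2 h3
    omega
  have h1 := sum_degree_eq F (F.biUnion id)
  rw [Finset.sum_congr rfl hreg, Finset.sum_const, smul_eq_mul] at h1
  have h2 : ∀ f ∈ F, (F.biUnion id ∩ f).card = 4 := by
    intro f hf
    have hsub : f ⊆ F.biUnion id := Finset.subset_biUnion_of_mem id hf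
    rw [Finset.inter_eq_right.2 hsub, hunif f hf]
  rw [Finset.sum_congr rfl h2, Finset.sum_const, smul_eq_mul] at h1
  linarith

/-- An intersecting 4-uniform family of at most two edges is covered by a single vertex. -/
lemma exists_common {V : Type*} [DecidableEq V] [Nonempty V] (F : Finset (Finset V))
    (hunif : ∀ e ∈ F, e.card = 4)
    (hint : ∀ e ∈ F, ∀ f ∈ F, e ≠ f → (e ∩ f).Nonempty)
    (hcard : F.card ≤ 2) : ∃ x, ∀ e ∈ F, x ∈ e := by
  have h : F.card = 0 ∨ F.card = 1 ∨ F.card = 2 := by omega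
  rcases h with h | h | h
  · rw [Finset.card_eq_zero] at h
    subst h
    exact ⟨Classical.arbitrary V, by simp⟩
  · obtain ⟨e, rfl⟩ := Finset.card_eq_one.1 h
    have : e.Nonempty := Finset.card_pos.1 (by rw [hunif e (by simp)]; norm_num)
    obtain ⟨x, hx⟩ := this
    exact ⟨x, by simpa using hx⟩
  · obtain ⟨e, f, hef, rfl⟩ := Finset.card_eq_two.1 h
    obtain ⟨x, hx⟩ := hint e (by simp) f (by simp) hef
    exact ⟨x, by simpa using hx⟩

lemma card_filter_not_mem {V : Type*} [DecidableEq V] (F : Finset (Finset V)) (v : V) :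
    degree F v + (F.filter (fun e => v ∉ e)).card = F.card :=
  Finset.card_filter_add_card_filter_not _

/-- Every 4-uniform intersecting hypergraph with exactly 9 edges in which at least 14
vertices lie on some edge has covering number at most 3. -/
theorem stmt15 {V : Type*} [DecidableEq V] (E : Finset (Finset V))
    (hunif : ∀ e ∈ E, e.card = 4)
    (hint : ∀ e ∈ E, ∀ f ∈ E, e ≠ f → (e ∩ f).Nonempty)
    (hcard : E.card = 9)
    (hverts : 14 ≤ (E.biUnion id).card) :
    coverNumber E ≤ 3 := by
  by_contra hcon
  have hne : (E.biUnion id).Nonempty := Finset.card_pos.1 (by omega)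
  have : Nonempty V := ⟨hne.choose⟩
  have hno : ∀ x y z : V, ∃ e ∈ E, x ∉ e ∧ y ∉ e ∧ z ∉ e := by
    intro x y z
    by_contra! h
    apply hcon
    have hc : IsCover E {x, y, z} := by
      intro e he
      by_cases hx : x ∈ e
      · exact ⟨x, hx, by simp⟩
      by_cases hy : y ∈ e
      · exact ⟨y, hy, by simp⟩
      exact ⟨z, h e he hx hy, by simp⟩
    exact (Nat.sInf_le (show _ ∈ {n : ℕ | ∃ C : Finset V, C.card = n ∧ IsCover E C} from
      ⟨_, rfl, hc⟩)).trans Finset.card_le_three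
  -- The edges missing two given vertices have no common vertex, so there are at least three.
  have hthree : ∀ x y : V, 3 ≤ ((E.filter (fun e => x ∉ e)).filter (fun e => y ∉ e)).card := by
    intro x y
    by_contra h
    obtain ⟨z, hz⟩ := exists_common ((E.filter (fun e => x ∉ e)).filter (fun e => y ∉ e))
      (fun e he => hunif e (Finset.mem_filter.1 (Finset.mem_filter.1 he).1).1)
      (fun e he f hf => hint e (Finset.mem_filter.1 (Finset.mem_filter.1 he).1).1
        f (Finset.mem_filter.1 (Finset.mem_filter.1 hf).1).1) (by omega)
    obtain ⟨e, he, hx, hy, hz'⟩ := hno x y z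
    exact hz' (hz e (by simp [he, hx, hy]))
  have hdeg4 : ∀ v, degree E v ≤ 4 := by
    intro v
    by_contra hv
    have h1 := card_filter_not_mem E v
    have h6 := hthree v
    set F := E.filter (fun e => v ∉ e) with hF
    have h3 : 3 ≤ F.card := (h6 v).trans (Finset.card_filter_le _ _)
    -- A vertex on two of the at most four edges of `F` leaves at most two edges.
    obtain ⟨A, hA, hA2⟩ := Finset.exists_subset_card_eq (show 2 ≤ F.card by omega)
    have hAE : A ⊆ E := hA.trans (Finset.filter_subset _ _)
    obtain ⟨y, hy⟩ := exists_common A (fun e he => hunif e (hAE he))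
      (fun e he f hf => hint e (hAE he) f (hAE hf)) hA2.le
    have h4 : A.card ≤ degree F y :=
      Finset.card_le_card fun e he => Finset.mem_filter.2 ⟨hA he, hy e he⟩
    have h5 := card_filter_not_mem F y
    have h7 := h6 y
    omega
  by_cases h4 : ∃ v, degree E v = 4
  · obtain ⟨v, hv⟩ := h4
    have h1 := card_filter_not_mem E v
    have h6 := hthree v
    set F := E.filter (fun e => v ∉ e) with hF
    have hFE : F ⊆ E := Finset.filter_subset _ _
    have hF2 : ∀ w, degree F w ≤ 2 := by
      intro w
      have h5 := card_filter_not_mem F w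
      have := h6 w
      omega
    have hU := mul_card_biUnion F 2 (fun e he => hunif e (hFE he))
      (fun e he f hf => hint e (hFE he) f (hFE hf)) (by omega) hF2
    have hsub : E.biUnion id ⊆ insert v (F.biUnion id) := by
      intro w hw
      obtain ⟨g, hg, hwg⟩ := Finset.mem_biUnion.1 hw
      have hwg : w ∈ g := hwg
      rw [Finset.mem_insert, or_iff_not_imp_left]
      intro hwv
      by_cases hvg : v ∈ g
      · by_contra hwF
        have hw0 : degree F w = 0 := by
          refine Finset.card_eq_zero.2 (Finset.filter_eq_empty_iff.2 fun f hf hwf => ?_)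
          exact hwF (Finset.mem_biUnion.2 ⟨f, hf, hwf⟩)
        have hv0 : degree F v = 0 :=
          Finset.card_eq_zero.2 (Finset.filter_eq_empty_iff.2 fun f hf =>
            (Finset.mem_filter.1 hf).2)
        have hs := sum_degree_eq F g
        have hvw : v ∈ g.erase w := Finset.mem_erase.2 ⟨Ne.symm hwv, hvg⟩
        rw [← Finset.add_sum_erase _ _ hwg, ← Finset.add_sum_erase _ _ hvw, hw0, hv0] at hs
        have hs1 : ∑ x ∈ (g.erase w).erase v, degree F x ≤ ((g.erase w).erase v).card • 2 :=
          Finset.sum_le_card_nsmul _ _ _ fun x _ => hF2 x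
        rw [Finset.card_erase_of_mem hvw, Finset.card_erase_of_mem hwg, hunif g hg] at hs1
        have hs2 : F.card • 1 ≤ ∑ f ∈ F, (g ∩ f).card := by
          refine Finset.card_nsmul_le_sum _ _ _ fun f hf => Finset.card_pos.2 ?_
          refine hint g hg f (hFE hf) ?_
          rintro rfl
          exact (Finset.mem_filter.1 hf).2 hvg
        simp only [smul_eq_mul] at hs1 hs2
        omega
      · exact Finset.mem_biUnion.2 ⟨g, Finset.mem_filter.2 ⟨hg, hvg⟩, hwg⟩
    have h7 := Finset.card_le_card hsub
    have h8 := Finset.card_insert_le v (F.biUnion id)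
    omega
  · have hdeg3 : ∀ v, degree E v ≤ 3 := by
      intro v
      have := hdeg4 v
      have : degree E v ≠ 4 := fun h => h4 ⟨v, h⟩
      omega
    have := mul_card_biUnion E 3 hunif hint (by omega) hdeg3
    omega
end
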